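/- arXiv:0812.0335 — 2 statements merged into one kernel-verified Lean document; each statement's English description precedes it below -/
import Mathlib

section
/- Let V be a finite-dimensional real inner product space, let J be an orthogonal complex structure on V, and let R_1 be a J-invariant (Kähler) algebraic curvature tensor on V. Suppose X ∈ V is a unit vector such that R_1(X,JX,X,JX) ≥ R_1(Z,JZ,Z,JZ) for every unit vector Z ∈ V, and let Y ∈ V be a unit vector with ⟨X,Y⟩ = ⟨JX,Y⟩ = 0. Then R_1(X,JX,X,Y) = R_1(X,JX,X,JY) = 0 and 2 R_1(X,JX,Y,JY) ≤ R_1(X,JX,X,JX). -/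
/-!
Write `H Z = R₁ Z (J Z) Z (J Z)` and `M = H X`. By homogeneity `H Z ≤ M ‖Z‖ ^ 4` for all `Z`.
For a unit vector `U ⊥ X`, the quartic `t ↦ H (X + t U) - M (1 + t ^ 2) ^ 2` is therefore
nonpositive and vanishes at `t = 0` (`kaehler_expand`), so its linear coefficient
`4 R₁ X (J X) X (J U)` is zero and its quadratic coefficient is nonpositive, which reads
`R₁ X (J X) U (J U) + 2 R₁ X (J U) X (J U) ≤ M` (`first_second_variation`).

Taking `U = J Y` and `U = Y` gives the two vanishing statements. Adding the two second-order
inequalities gives the last claim, because the Bianchi identity and `J`-invariance yield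
`R₁ X (J X) Y (J Y) = R₁ X Y X Y + R₁ X (J Y) X (J Y)`.
-/

open scoped RealInnerProductSpace
open Finset

variable {V : Type*} [NormedAddCommGroup V] [InnerProductSpace ℝ V]

/-- An algebraic curvature tensor on a real inner product space: a multilinear map
(linearity in the first slot, together with the symmetries, gives full multilinearity)
satisfying the standard symmetries and the first Bianchi identity. -/
structure IsAlgCurvTensor (R : V → V → V → V → ℝ) : Prop where
  addLeft : ∀ X X' Y Z W, R (X + X') Y Z W = R X Y Z W + R X' Y Z W
  smulLeft : ∀ (c : ℝ) (X Y Z W : V), R (c • X) Y Z W = c * R X Y Z W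
  antisymm : ∀ X Y Z W, R X Y Z W = - R Y X Z W
  pairSymm : ∀ X Y Z W, R X Y Z W = R Z W X Y
  bianchi : ∀ X Y Z W, R X Y Z W + R Y Z X W + R Z X Y W = 0

/-- The bilinear expression `B(R,S)`, computed with respect to an orthonormal basis
(the result is independent of the choice of orthonormal basis). -/
noncomputable def Bop [FiniteDimensional ℝ V] (R S : V → V → V → V → ℝ)
    (X Y Z W : V) : ℝ :=
  let b := stdOrthonormalBasis ℝ V
  (1 / 2) * ∑ p, ∑ q,
      (R X Y (b p) (b q) * S Z W (b p) (b q) + R Z W (b p) (b q) * S X Y (b p) (b q))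
  + ∑ p, ∑ q,
      (R X (b p) Z (b q) * S Y (b p) W (b q) + R Y (b p) W (b q) * S X (b p) Z (b q))
  - ∑ p, ∑ q,
      (R X (b p) W (b q) * S Y (b p) Z (b q) + R Y (b p) Z (b q) * S X (b p) W (b q))

/-- `Q(R) = B(R,R)`. -/
noncomputable def Qop [FiniteDimensional ℝ V] (R : V → V → V → V → ℝ) :
    V → V → V → V → ℝ :=
  Bop R R

/-- `R` has nonnegative isotropic curvature. -/
def NonnegIsotropic (R : V → V → V → V → ℝ) : Prop :=
  ∀ e₁ e₂ e₃ e₄ : V, Orthonormal ℝ ![e₁, e₂, e₃, e₄] →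
    0 ≤ R e₁ e₃ e₁ e₃ + R e₁ e₄ e₁ e₄ + R e₂ e₃ e₂ e₃ + R e₂ e₄ e₂ e₄
        - 2 * R e₁ e₂ e₃ e₄

/-- The Ricci tensor of an algebraic curvature tensor. -/
noncomputable def RicciT [FiniteDimensional ℝ V] (R : V → V → V → V → ℝ)
    (X Y : V) : ℝ :=
  ∑ p, R X (stdOrthonormalBasis ℝ V p) Y (stdOrthonormalBasis ℝ V p)

/-- An orthogonal complex structure on `V`. -/
def IsOrthCplx (J : V →ₗ[ℝ] V) : Prop :=
  (∀ X, J (J X) = -X) ∧ (∀ X Y : V, ⟪J X, J Y⟫ = ⟪X, Y⟫)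

/-- A quaternionic structure on `V`: three orthogonal complex structures with `IJK = -id`. -/
def IsQuatStruct (I J K : V →ₗ[ℝ] V) : Prop :=
  IsOrthCplx I ∧ IsOrthCplx J ∧ IsOrthCplx K ∧ ∀ X, I (J (K X)) = -X

/-- `R` is `J`-invariant (Kähler). -/
def IsKaehlerTensor (J : V →ₗ[ℝ] V) (R : V → V → V → V → ℝ) : Prop :=
  ∀ X Y Z W, R X Y (J Z) (J W) = R X Y Z W

/-- `R` is hyper-Kähler with respect to the quaternionic structure `I, J, K`. -/
def IsHyperKaehler (I J K : V →ₗ[ℝ] V) (R : V → V → V → V → ℝ) : Prop :=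
  IsKaehlerTensor I R ∧ IsKaehlerTensor J R ∧ IsKaehlerTensor K R

/-- The curvature tensor `R₀` of quaternionic projective space, associated to a
quaternionic structure `I, J, K`. -/
noncomputable def quatR0 (I J K : V →ₗ[ℝ] V) (X Y Z W : V) : ℝ :=
  (1 / 4) * (⟪X, Z⟫ * ⟪Y, W⟫ - ⟪X, W⟫ * ⟪Y, Z⟫
    + 2 * ⟪I X, Y⟫ * ⟪I Z, W⟫ + ⟪I X, Z⟫ * ⟪I Y, W⟫ - ⟪I X, W⟫ * ⟪I Y, Z⟫
    + 2 * ⟪J X, Y⟫ * ⟪J Z, W⟫ + ⟪J X, Z⟫ * ⟪J Y, W⟫ - ⟪J X, W⟫ * ⟪J Y, Z⟫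
    + 2 * ⟪K X, Y⟫ * ⟪K Z, W⟫ + ⟪K X, Z⟫ * ⟪K Y, W⟫ - ⟪K X, W⟫ * ⟪K Y, Z⟫)

/-- First- and second-order conditions at a maximum at `0` of a quartic polynomial. -/
lemma quartic_nonpos_coeffs {c₁ c₂ c₃ c₄ : ℝ}
    (h : ∀ t : ℝ, c₁ * t + c₂ * t ^ 2 + c₃ * t ^ 3 + c₄ * t ^ 4 ≤ 0) : c₁ = 0 ∧ c₂ ≤ 0 := by
  constructor
  · have hd : HasDerivAt (fun t : ℝ => c₁ * t + c₂ * t ^ 2 + c₃ * t ^ 3 + c₄ * t ^ 4) c₁ 0 := by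
      have h1 := (hasDerivAt_id (0 : ℝ)).const_mul c₁
      have h2 := (hasDerivAt_pow 2 (0 : ℝ)).const_mul c₂
      have h3 := (hasDerivAt_pow 3 (0 : ℝ)).const_mul c₃
      have h4 := (hasDerivAt_pow 4 (0 : ℝ)).const_mul c₄
      exact (((h1.add h2).add h3).add h4).congr_deriv (by simp)
    refine IsLocalMax.hasDerivAt_eq_zero (Filter.Eventually.of_forall fun t => ?_) hd
    simpa using h t
  · by_contra! hc
    have hden : 0 < c₂ + |c₄| := by positivity
    -- Averaging over `±t` removes the odd terms; this `t` makes `|c₄| t ^ 2 < c₂`.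
    obtain ⟨t, ht⟩ : ∃ t, t = c₂ / (c₂ + |c₄|) := ⟨_, rfl⟩
    have ht0 : 0 < t := by rw [ht]; positivity
    have ht1 : t ≤ 1 := by
      rw [ht, div_le_one hden]; linarith [abs_nonneg c₄]
    have htm : t * (c₂ + |c₄|) = c₂ := by rw [ht]; field_simp
    have hsum : (c₂ + c₄ * t ^ 2) * t ^ 2 ≤ 0 := by nlinarith [h t, h (-t)]
    have hle : c₂ + c₄ * t ^ 2 ≤ 0 := nonpos_of_mul_nonpos_left hsum (by positivity)
    have h1 : -(|c₄| * t ^ 2) ≤ c₄ * t ^ 2 := by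
      nlinarith [neg_abs_le c₄, sq_nonneg t]
    have h2 : |c₄| * t ^ 2 ≤ |c₄| * t :=
      mul_le_mul_of_nonneg_left (by nlinarith) (abs_nonneg c₄)
    nlinarith [mul_pos ht0 hc]

namespace IsAlgCurvTensor

variable {R : V → V → V → V → ℝ} (hR : IsAlgCurvTensor R)
include hR

lemma add_two (X Y Y' Z W : V) : R X (Y + Y') Z W = R X Y Z W + R X Y' Z W := by
  rw [hR.antisymm, hR.addLeft, hR.antisymm Y, hR.antisymm Y']; ring

lemma add_three (X Y Z Z' W : V) : R X Y (Z + Z') W = R X Y Z W + R X Y Z' W := by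
  rw [hR.pairSymm, hR.addLeft, hR.pairSymm Z, hR.pairSymm Z']

lemma add_four (X Y Z W W' : V) : R X Y Z (W + W') = R X Y Z W + R X Y Z W' := by
  rw [hR.pairSymm, hR.add_two, hR.pairSymm Z, hR.pairSymm Z]

lemma smul_two (c : ℝ) (X Y Z W : V) : R X (c • Y) Z W = c * R X Y Z W := by
  rw [hR.antisymm, hR.smulLeft, hR.antisymm Y]; ring

lemma smul_three (c : ℝ) (X Y Z W : V) : R X Y (c • Z) W = c * R X Y Z W := by
  rw [hR.pairSymm, hR.smulLeft, hR.pairSymm Z]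

lemma smul_four (c : ℝ) (X Y Z W : V) : R X Y Z (c • W) = c * R X Y Z W := by
  rw [hR.pairSymm, hR.smul_two, hR.pairSymm Z]

lemma neg_four (X Y Z W : V) : R X Y Z (-W) = -R X Y Z W := by
  simpa using hR.smul_four (-1) X Y Z W

variable {J : V →ₗ[ℝ] V} (hJ : IsOrthCplx J) (hK : IsKaehlerTensor J R)
include hJ hK

/-- For a Kähler tensor the form `(Z, W) ↦ R _ _ Z (J W)` is symmetric. -/
lemma kaehler_swap (X Y Z W : V) : R X Y Z (J W) = R X Y W (J Z) := by
  rw [← hK X Y Z, hJ.1, hR.neg_four, hR.pairSymm, hR.antisymm, hR.pairSymm W, neg_neg]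

lemma kaehler_swap_left (X Y Z W : V) : R Z (J W) X Y = R W (J Z) X Y := by
  rw [hR.pairSymm, hR.kaehler_swap hJ hK, hR.pairSymm]

lemma kaehler_expand (X U : V) (t : ℝ) :
    R (X + t • U) (J (X + t • U)) (X + t • U) (J (X + t • U)) =
      R X (J X) X (J X) + 4 * R X (J X) X (J U) * t
        + (2 * R X (J X) U (J U) + 4 * R X (J U) X (J U)) * t ^ 2
        + 4 * R U (J U) X (J U) * t ^ 3 + R U (J U) U (J U) * t ^ 4 := by
  simp only [map_add, map_smul, hR.addLeft, hR.add_two, hR.add_three, hR.add_four,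
    hR.smulLeft, hR.smul_two, hR.smul_three, hR.smul_four]
  simp only [hR.kaehler_swap hJ hK _ _ U X, hR.kaehler_swap_left hJ hK _ _ U X]
  rw [hR.pairSymm X (J U) X (J X), hR.pairSymm X (J U) U (J U), hR.pairSymm U (J U) X (J X)]
  ring

/-- The Bianchi identity combined with `J`-invariance. -/
lemma kaehler_bianchi (X Y : V) :
    R X (J X) Y (J Y) = R X Y X Y + R X (J Y) X (J Y) := by
  have h := hR.bianchi X (J X) Y (J Y)
  have h1 : R (J X) Y X (J Y) = -R X (J Y) X (J Y) := by
    rw [hR.antisymm, hR.kaehler_swap_left hJ hK]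
  have h2 : R Y X (J X) (J Y) = -R X Y X Y := by
    rw [hK, hR.antisymm]
  linarith

omit hJ hK in
/-- A bound for the holomorphic sectional curvature on unit vectors extends by homogeneity. -/
lemma holSect_le {M : ℝ} (hM : ∀ Z : V, ‖Z‖ = 1 → R Z (J Z) Z (J Z) ≤ M) (Z : V) :
    R Z (J Z) Z (J Z) ≤ M * ‖Z‖ ^ 4 := by
  have hhom : ∀ (c : ℝ) (W : V), R (c • W) (J (c • W)) (c • W) (J (c • W)) =
      c ^ 4 * R W (J W) W (J W) := by
    intro c W
    simp only [map_smul, hR.smulLeft, hR.smul_two, hR.smul_three, hR.smul_four]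
    ring
  rcases eq_or_ne Z 0 with rfl | hZ
  · simpa using (hhom 0 0).le
  · have h1 := hM (‖Z‖⁻¹ • Z) (norm_smul_inv_norm hZ)
    have h2 := hhom ‖Z‖ (‖Z‖⁻¹ • Z)
    rw [smul_inv_smul₀ (norm_ne_zero_iff.mpr hZ)] at h2
    rw [h2, mul_comm]
    gcongr

/-- First and second variation of the holomorphic sectional curvature at a maximum `X`, in the
direction of a unit vector `U ⊥ X`. -/
lemma first_second_variation {X U : V} (hX : ‖X‖ = 1)
    (hmax : ∀ Z : V, ‖Z‖ = 1 → R Z (J Z) Z (J Z) ≤ R X (J X) X (J X))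
    (hU : ‖U‖ = 1) (hXU : ⟪X, U⟫ = 0) :
    R X (J X) X (J U) = 0 ∧
      R X (J X) U (J U) + 2 * R X (J U) X (J U) ≤ R X (J X) X (J X) := by
  have key := quartic_nonpos_coeffs (c₁ := 4 * R X (J X) X (J U))
    (c₂ := 2 * R X (J X) U (J U) + 4 * R X (J U) X (J U) - 2 * R X (J X) X (J X))
    (c₃ := 4 * R U (J U) X (J U)) (c₄ := R U (J U) U (J U) - R X (J X) X (J X)) (by
      intro t
      have h := hR.holSect_le hmax (X + t • U)
      have hn : ‖X + t • U‖ ^ 2 = 1 + t ^ 2 := by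
        rw [norm_add_sq_real, inner_smul_right, hXU, norm_smul, hX, hU]
        simp
      rw [hR.kaehler_expand hJ hK, show ‖X + t • U‖ ^ 4 = (‖X + t • U‖ ^ 2) ^ 2 by ring, hn] at h
      linarith)
  constructor <;> linarith [key.1, key.2]

end IsAlgCurvTensor

theorem max_hol_sect_curv [FiniteDimensional ℝ V]
    (J : V →ₗ[ℝ] V) (hJ : IsOrthCplx J)
    (R₁ : V → V → V → V → ℝ) (hR₁ : IsAlgCurvTensor R₁)
    (hK : IsKaehlerTensor J R₁)
    (X : V) (hX : ‖X‖ = 1)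
    (hmax : ∀ Z : V, ‖Z‖ = 1 → R₁ Z (J Z) Z (J Z) ≤ R₁ X (J X) X (J X))
    (Y : V) (hY : ‖Y‖ = 1) (hXY : ⟪X, Y⟫ = 0) (hJXY : ⟪J X, Y⟫ = 0) :
    R₁ X (J X) X Y = 0 ∧ R₁ X (J X) X (J Y) = 0 ∧
      2 * R₁ X (J X) Y (J Y) ≤ R₁ X (J X) X (J X) := by
  have hJY : ‖J Y‖ = 1 := by
    rw [← hY, ← sq_eq_sq₀ (norm_nonneg _) (norm_nonneg _), ← real_inner_self_eq_norm_sq,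
      ← real_inner_self_eq_norm_sq, hJ.2]
  have hXJY : ⟪X, J Y⟫ = 0 := by
    have h := hJ.2 (J X) Y
    rw [hJ.1, inner_neg_left, hJXY] at h
    linarith
  obtain ⟨h1, h2⟩ := hR₁.first_second_variation hJ hK hX hmax hY hXY
  obtain ⟨h3, h4⟩ := hR₁.first_second_variation hJ hK hX hmax hJY hXJY
  have hB := hR₁.kaehler_bianchi hJ hK X Y
  have hsq : R₁ X (-Y) X (-Y) = R₁ X Y X Y := by
    rw [hR₁.neg_four, hR₁.pairSymm, hR₁.neg_four, neg_neg]
  rw [hJ.1, hR₁.neg_four] at h3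
  rw [hK, hJ.1, hsq] at h4
  refine ⟨by linarith, h1, by linarith⟩
end

section
/- Let V be a real inner product space of dimension 4m ≥ 8 with a quaternionic structure I, J, K, and let R_1 be a hyper-Kähler algebraic curvature tensor on V. Suppose X ∈ V is a unit vector such that R_1(X,JX,X,JX) ≥ R_1(Z,AZ,Z,AZ) for every unit vector Z ∈ V and every A = aI + bJ + cK with a² + b² + c² = 1. Then Q(R_1)(X,JX,X,JX) ≤ (2m+4) R_1(X,JX,X,JX)². -/
/-!
Write `σ = R₁(X,JX,X,JX)` and consider the symmetric bilinear forms `s(Y,W) = R₁(X,Y,X,W)` and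
`t(Y,W) = R₁(X,JX,Y,JW)`. The Bianchi identity and the Kähler symmetry for `J` give
`t(Y,W) = s(Y,W) + s(JY,JW)`, and with `d(Y,W) = s(Y,W) - s(JY,JW)` one finds
`Q(R₁)(X,JX,X,JX) = 2|t|² - |d|²` (`Qop_eq`), where `|·|` is the Hilbert-Schmidt norm.

* Since `d(X,X) = -σ` and `d(JX,JX) = σ`, we have `|d|² ≥ 2σ²` (`two_mul_sq_le_hilbertSchmidt`).
* `X` maximizes `Z ↦ R₁(Z,JZ,Z,JZ)` on the unit sphere. The first-order condition says
  `t(X,·) = σ⟪X,·⟫`. As `t` is `J`-invariant and changes sign under `I`, the vectors `X, JX` are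
  eigenvectors of `t` with eigenvalue `σ`, and `IX, IJX` with eigenvalue `-σ`. The second-order
  conditions in the directions `Y` and `JY` add up to `t(Y,Y) ≤ (σ/2)|Y|²` for `Y` orthogonal to
  these four vectors. Replacing `Y` by `IY` gives `|t(Y,Y)| ≤ (σ/2)|Y|²`, so that
  `|t|² ≤ 4σ² + (4m-4)σ²/4 = (m+3)σ²` (`hilbertSchmidt_le`).

Together, `Q ≤ 2(m+3)σ² - 2σ² = (2m+4)σ²`.
-/


open scoped RealInnerProductSpace
open Finset

variable {V : Type*} [NormedAddCommGroup V] [InnerProductSpace ℝ V]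

/-! ### Hilbert-Schmidt sums of bilinear forms -/

section HilbertSchmidt

variable {ι : Type*} [Fintype ι]

/-- A linear functional is recovered from its values on an orthonormal basis. -/
lemma sum_inner_mul_apply (b : OrthonormalBasis ι ℝ V) (β : V →ₗ[ℝ] ℝ) (x : V) :
    ∑ q, ⟪b q, x⟫ * β (b q) = β x := by
  conv_rhs => rw [← b.sum_repr' x]
  simp

/-- The vector representing a linear functional. -/
noncomputable def rieszVec (b : OrthonormalBasis ι ℝ V) (β : V →ₗ[ℝ] ℝ) : V :=
  ∑ q, β (b q) • b q

lemma inner_rieszVec (b : OrthonormalBasis ι ℝ V) (β : V →ₗ[ℝ] ℝ) (x : V) :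
    ⟪rieszVec b β, x⟫ = β x := by
  rw [← sum_inner_mul_apply b β x, rieszVec, sum_inner]
  refine Finset.sum_congr rfl fun q _ => ?_
  rw [real_inner_smul_left, mul_comm]

lemma sum_apply_mul_apply (b : OrthonormalBasis ι ℝ V) (α β : V →ₗ[ℝ] ℝ) :
    ∑ q, α (b q) * β (b q) = ⟪rieszVec b α, rieszVec b β⟫ := by
  rw [inner_rieszVec, rieszVec, map_sum]
  simp [mul_comm]

lemma IsOrthCplx.inner_left {J : V →ₗ[ℝ] V} (hJ : IsOrthCplx J) (x y : V) :
    ⟪J x, y⟫ = -⟪x, J y⟫ := by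
  rw [← hJ.2 x (J y), hJ.1, inner_neg_right, neg_neg]

lemma IsOrthCplx.inner_self {J : V →ₗ[ℝ] V} (hJ : IsOrthCplx J) (x : V) :
    ⟪x, J x⟫ = 0 := by
  have h := hJ.inner_left x x
  rw [real_inner_comm] at h
  linarith

/-- An orthogonal complex structure is skew-adjoint, so it can be moved across a contraction at
the cost of a sign. -/
lemma sum_move (b : OrthonormalBasis ι ℝ V) {J : V →ₗ[ℝ] V} (hJ : IsOrthCplx J)
    (α β : V →ₗ[ℝ] ℝ) :
    ∑ q, α (J (b q)) * β (b q) = -∑ q, α (b q) * β (J (b q)) := by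
  have h1 := sum_inner_mul_apply b β (J (rieszVec b α))
  have h2 := sum_inner_mul_apply b (β ∘ₗ J) (rieszVec b α)
  simp only [LinearMap.comp_apply] at h2
  have h3 : ∀ q, α (b q) = ⟪b q, rieszVec b α⟫ := fun q => by
    rw [real_inner_comm, inner_rieszVec]
  have h4 : ∀ q, α (J (b q)) = -⟪b q, J (rieszVec b α)⟫ := fun q => by
    rw [← hJ.inner_left, real_inner_comm, inner_rieszVec]
  simp only [h3, h4, neg_mul, Finset.sum_neg_distrib, h1, h2]

/-- The squared Hilbert-Schmidt norm of a bilinear form controls its diagonal values at two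
orthonormal vectors; here these values are `-σ` and `σ`. -/
lemma two_mul_sq_le_hilbertSchmidt (b : OrthonormalBasis ι ℝ V) (d : V →ₗ[ℝ] V →ₗ[ℝ] ℝ)
    {x y : V} {σ : ℝ} (hx : ⟪x, x⟫ = 1) (hy : ⟪y, y⟫ = 1) (hxy : ⟪x, y⟫ = 0)
    (hdx : d x x = -σ) (hdy : d y y = σ) :
    2 * σ ^ 2 ≤ ∑ p, ∑ q, d (b p) (b q) ^ 2 := by
  have hd : ∀ z, ∑ p, ∑ q, ⟪b p, z⟫ * ⟪b q, z⟫ * d (b p) (b q) = d z z := by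
    intro z
    have h1 := sum_inner_mul_apply b (d.flip z) z
    simp only [LinearMap.flip_apply] at h1
    rw [← h1]
    refine Finset.sum_congr rfl fun p _ => ?_
    rw [← sum_inner_mul_apply b (d (b p)) z, Finset.mul_sum]
    exact Finset.sum_congr rfl fun q _ => by ring
  have hin : ∀ z w : V, ∑ p, ⟪b p, z⟫ * ⟪b p, w⟫ = ⟪z, w⟫ := by
    intro z w
    rw [← b.sum_inner_mul_inner z w]
    exact Finset.sum_congr rfl fun p _ => by rw [real_inner_comm]
  have hM : ∀ z w : V, ∑ p, ∑ q, ⟪b p, z⟫ * ⟪b q, z⟫ * (⟪b p, w⟫ * ⟪b q, w⟫) = ⟪z, w⟫ ^ 2 := by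
    intro z w
    rw [sq, ← hin z w, Finset.sum_mul_sum]
    exact Finset.sum_congr rfl fun p _ => Finset.sum_congr rfl fun q _ => by ring
  -- compare `d` with the form `-σ (x ⊗ x - y ⊗ y)`
  have h0 : 0 ≤ ∑ p, ∑ q,
      (d (b p) (b q) + σ * (⟪b p, x⟫ * ⟪b q, x⟫ - ⟪b p, y⟫ * ⟪b q, y⟫)) ^ 2 :=
    Finset.sum_nonneg fun p _ => Finset.sum_nonneg fun q _ => sq_nonneg _
  have h1 : ∑ p, ∑ q,
      (d (b p) (b q) + σ * (⟪b p, x⟫ * ⟪b q, x⟫ - ⟪b p, y⟫ * ⟪b q, y⟫)) ^ 2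
      = ∑ p, ∑ q, d (b p) (b q) ^ 2 + 2 * σ * (d x x) - 2 * σ * (d y y)
        + σ ^ 2 * ⟪x, x⟫ ^ 2 - 2 * σ ^ 2 * ⟪x, y⟫ ^ 2 + σ ^ 2 * ⟪y, y⟫ ^ 2 := by
    rw [← hd x, ← hd y, ← hM x x, ← hM x y, ← hM y y]
    simp only [Finset.mul_sum, ← Finset.sum_add_distrib, ← Finset.sum_sub_distrib]
    exact Finset.sum_congr rfl fun p _ => Finset.sum_congr rfl fun q _ => by ring
  rw [h1, hdx, hdy, hx, hy, hxy] at h0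
  nlinarith

/-- A symmetric form that preserves the orthogonal complement of four orthonormal eigenvectors with
eigenvalues `±σ`, and whose quadratic form is bounded by `σ/2` on that complement, has squared
Hilbert-Schmidt norm at most `4σ² + (dim V - 4) σ²/4`. -/
lemma hilbertSchmidt_le (b : OrthonormalBasis ι ℝ V) (t : V →ₗ[ℝ] V →ₗ[ℝ] ℝ)
    (hsymm : ∀ Y W, t Y W = t W Y) {σ : ℝ} (hσ : 0 ≤ σ) (E : Fin 4 → V) (hE : Orthonormal ℝ E)
    (ε : Fin 4 → ℝ) (hε : ∀ i, ε i ^ 2 = 1) (heig : ∀ i Y, t (E i) Y = ε i * σ * ⟪E i, Y⟫)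
    (hquad : ∀ Y, (∀ i, ⟪E i, Y⟫ = 0) → |t Y Y| ≤ σ / 2 * ⟪Y, Y⟫) :
    ∑ p, ∑ q, t (b p) (b q) ^ 2 ≤ σ ^ 2 / 4 * Fintype.card ι + 3 * σ ^ 2 := by
  have hEE : ∀ i j, ⟪E i, E j⟫ = if i = j then 1 else 0 := orthonormal_iff_ite.1 hE
  set T : V → V := fun Y => rieszVec b (t Y) with hTdef
  have hT : ∀ Y W, ⟪T Y, W⟫ = t Y W := fun Y W => inner_rieszVec b (t Y) W
  have hTadd : ∀ Y W, T (Y + W) = T Y + T W := by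
    intro Y W
    refine ext_inner_right ℝ fun Z => ?_
    rw [inner_add_left, hT, hT, hT, map_add, LinearMap.add_apply]
  -- on the complement, the quadratic bound self-improves to an operator bound by polarization
  have hperp : ∀ Z, (∀ i, ⟪E i, Z⟫ = 0) → ⟪T Z, T Z⟫ ≤ σ ^ 2 / 4 * ⟪Z, Z⟫ := by
    intro Z hZ
    have hTZ : ∀ i, ⟪E i, T Z⟫ = 0 := by
      intro i
      rw [real_inner_comm, hT, hsymm, heig, hZ, mul_zero]
    have key : ∀ r : ℝ, 4 * r * ⟪T Z, T Z⟫ ≤ σ * (⟪Z, Z⟫ + r ^ 2 * ⟪T Z, T Z⟫) := by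
      intro r
      have h1 := (abs_le.1 (hquad (Z + r • T Z) fun i => by
        rw [inner_add_right, real_inner_smul_right, hZ, hTZ]; ring)).2
      have h2 := (abs_le.1 (hquad (Z - r • T Z) fun i => by
        rw [inner_sub_right, real_inner_smul_right, hZ, hTZ]; ring)).1
      have h3 : t Z (T Z) = ⟪T Z, T Z⟫ := (hT Z (T Z)).symm
      simp only [map_add, map_sub, LinearMap.add_apply, LinearMap.sub_apply, map_smul,
        LinearMap.smul_apply, smul_eq_mul, inner_add_left, inner_add_right, inner_sub_left,
        inner_sub_right, real_inner_smul_left, real_inner_smul_right, hsymm (T Z) Z, h3,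
        real_inner_comm Z (T Z)] at h1 h2
      nlinarith
    rcases hσ.eq_or_lt with h0 | hpos
    · have := key 1
      rw [← h0] at this ⊢
      nlinarith
    · have h := key (2 / σ)
      have h' : 4 * (2 / σ) * ⟪T Z, T Z⟫ * σ ≤ σ * (⟪Z, Z⟫ + (2 / σ) ^ 2 * ⟪T Z, T Z⟫) * σ :=
        mul_le_mul_of_nonneg_right h hσ
      field_simp at h'
      nlinarith
  have hbound : ∀ Y, ⟪T Y, T Y⟫ ≤ σ ^ 2 / 4 * ⟪Y, Y⟫ + 3 / 4 * σ ^ 2 * ∑ i, ⟪E i, Y⟫ ^ 2 := by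
    intro Y
    set P : V := ∑ i, ⟪E i, Y⟫ • E i with hP
    set Q : V := ∑ i, (ε i * σ * ⟪E i, Y⟫) • E i with hQ
    have hEP : ∀ i, ⟪E i, P⟫ = ⟪E i, Y⟫ := fun i => by
      simp [hP, inner_sum, real_inner_smul_right, hEE]
    have hZ : ∀ i, ⟪E i, Y - P⟫ = 0 := fun i => by rw [inner_sub_right, hEP, sub_self]
    have hTP : T P = Q := by
      refine ext_inner_right ℝ fun W => ?_
      rw [hT, hP, hQ, sum_inner, map_sum, LinearMap.sum_apply]
      refine Finset.sum_congr rfl fun i _ => ?_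
      rw [map_smul, LinearMap.smul_apply, heig, real_inner_smul_left, smul_eq_mul]
      ring
    have hTY : T Y = Q + T (Y - P) := by rw [← hTP, ← hTadd, add_sub_cancel]
    have hQT : ⟪Q, T (Y - P)⟫ = 0 := by
      rw [hQ, sum_inner]
      refine Finset.sum_eq_zero fun i _ => ?_
      rw [real_inner_smul_left, real_inner_comm (T (Y - P)) (E i), hT, hsymm, heig, hZ]
      ring
    have hPZ : ⟪P, Y - P⟫ = 0 := by
      rw [hP, sum_inner]
      refine Finset.sum_eq_zero fun i _ => ?_
      rw [real_inner_smul_left, ← hP, hZ, mul_zero]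
    have hQQ : ⟪Q, Q⟫ = σ ^ 2 * ∑ i, ⟪E i, Y⟫ ^ 2 := by
      have : ∀ i, ⟪E i, Q⟫ = ε i * σ * ⟪E i, Y⟫ := fun i => by
        simp [hQ, inner_sum, real_inner_smul_right, hEE]
      conv_lhs => rw [hQ, sum_inner]
      rw [Finset.mul_sum]
      refine Finset.sum_congr rfl fun i _ => ?_
      rw [real_inner_smul_left, ← hQ, this]
      linear_combination σ ^ 2 * ⟪E i, Y⟫ ^ 2 * hε i
    have hPP : ⟪P, P⟫ = ∑ i, ⟪E i, Y⟫ ^ 2 := by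
      conv_lhs => rw [hP, sum_inner]
      refine Finset.sum_congr rfl fun i _ => ?_
      rw [real_inner_smul_left, ← hP, hEP, sq]
    have hYY : ⟪Y, Y⟫ = ⟪P, P⟫ + ⟪Y - P, Y - P⟫ := by
      conv_lhs => rw [← add_sub_cancel P Y]
      rw [inner_add_left, inner_add_right, inner_add_right, real_inner_comm P (Y - P), hPZ]
      ring
    have h := hperp (Y - P) hZ
    rw [hTY, inner_add_left, inner_add_right, inner_add_right, real_inner_comm Q (T (Y - P)), hQT, hQQ, hYY,
      hPP]
    linarith
  calc ∑ p, ∑ q, t (b p) (b q) ^ 2 = ∑ p, ⟪T (b p), T (b p)⟫ := by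
        refine Finset.sum_congr rfl fun p _ => ?_
        rw [hTdef, ← sum_apply_mul_apply]
        simp only [sq]
    _ ≤ ∑ p, (σ ^ 2 / 4 * ⟪b p, b p⟫ + 3 / 4 * σ ^ 2 * ∑ i, ⟪E i, b p⟫ ^ 2) :=
        Finset.sum_le_sum fun p _ => hbound (b p)
    _ = σ ^ 2 / 4 * Fintype.card ι + 3 * σ ^ 2 := by
        have h1 : ∀ i, ∑ p, ⟪E i, b p⟫ ^ 2 = 1 := by
          intro i
          have := b.sum_inner_mul_inner (E i) (E i)
          rw [hEE, if_pos rfl] at this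
          rw [← this]
          exact Finset.sum_congr rfl fun p _ => by rw [sq, real_inner_comm (E i)]
        have h2 : ∀ p, ⟪b p, b p⟫ = (1 : ℝ) := fun p => by
          rw [real_inner_self_eq_norm_sq, b.orthonormal.1 p, one_pow]
        rw [Finset.sum_add_distrib, ← Finset.mul_sum, ← Finset.mul_sum, Finset.sum_comm]
        simp only [h1, h2, Finset.sum_const, Finset.card_univ, Fintype.card_fin, nsmul_eq_mul]
        push_cast
        ring

end HilbertSchmidt

/-! ### Algebraic identities for Kähler curvature tensors -/

namespace IsAlgCurvTensor

variable {R : V → V → V → V → ℝ}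

lemma add₂ (hR : IsAlgCurvTensor R) (X Y Y' Z W : V) :
    R X (Y + Y') Z W = R X Y Z W + R X Y' Z W := by
  rw [hR.antisymm, hR.addLeft, hR.antisymm Y, hR.antisymm Y']
  ring

lemma smul₂ (hR : IsAlgCurvTensor R) (c : ℝ) (X Y Z W : V) :
    R X (c • Y) Z W = c * R X Y Z W := by
  rw [hR.antisymm, hR.smulLeft, hR.antisymm Y]
  ring

lemma add₃ (hR : IsAlgCurvTensor R) (X Y Z Z' W : V) :
    R X Y (Z + Z') W = R X Y Z W + R X Y Z' W := by
  rw [hR.pairSymm, hR.addLeft, hR.pairSymm Z, hR.pairSymm Z']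

lemma smul₃ (hR : IsAlgCurvTensor R) (c : ℝ) (X Y Z W : V) :
    R X Y (c • Z) W = c * R X Y Z W := by
  rw [hR.pairSymm, hR.smulLeft, hR.pairSymm Z]

lemma add₄ (hR : IsAlgCurvTensor R) (X Y Z W W' : V) :
    R X Y Z (W + W') = R X Y Z W + R X Y Z W' := by
  rw [hR.pairSymm, hR.add₂, hR.pairSymm Z, hR.pairSymm Z]

lemma smul₄ (hR : IsAlgCurvTensor R) (c : ℝ) (X Y Z W : V) :
    R X Y Z (c • W) = c * R X Y Z W := by
  rw [hR.pairSymm, hR.smul₂, hR.pairSymm Z]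

lemma neg₁ (hR : IsAlgCurvTensor R) (X Y Z W : V) : R (-X) Y Z W = -R X Y Z W := by
  rw [← neg_one_smul ℝ X, hR.smulLeft, neg_one_mul]

lemma neg₂ (hR : IsAlgCurvTensor R) (X Y Z W : V) : R X (-Y) Z W = -R X Y Z W := by
  rw [← neg_one_smul ℝ Y, hR.smul₂, neg_one_mul]

lemma neg₃ (hR : IsAlgCurvTensor R) (X Y Z W : V) : R X Y (-Z) W = -R X Y Z W := by
  rw [← neg_one_smul ℝ Z, hR.smul₃, neg_one_mul]

lemma neg₄ (hR : IsAlgCurvTensor R) (X Y Z W : V) : R X Y Z (-W) = -R X Y Z W := by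
  rw [← neg_one_smul ℝ W, hR.smul₄, neg_one_mul]

lemma antisymm' (hR : IsAlgCurvTensor R) (X Y Z W : V) : R X Y Z W = -R X Y W Z := by
  rw [hR.pairSymm, hR.antisymm, hR.pairSymm W]

lemma kaehler₃ (hR : IsAlgCurvTensor R) {J : V →ₗ[ℝ] V} (hJ : IsOrthCplx J)
    (hK : IsKaehlerTensor J R) (X Y Z W : V) : R X Y (J Z) W = -R X Y Z (J W) := by
  rw [← hK X Y Z (J W), hJ.1, hR.neg₄, neg_neg]

lemma kaehler₁ (hR : IsAlgCurvTensor R) {J : V →ₗ[ℝ] V} (hJ : IsOrthCplx J)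
    (hK : IsKaehlerTensor J R) (X Y Z W : V) : R (J X) Y Z W = -R X (J Y) Z W := by
  rw [hR.pairSymm, hR.kaehler₃ hJ hK, hR.pairSymm X]

/-- The Jacobi form `(Y, W) ↦ R(X, Y, X, W)`. -/
def jacobi (hR : IsAlgCurvTensor R) (X : V) : V →ₗ[ℝ] V →ₗ[ℝ] ℝ :=
  LinearMap.mk₂ ℝ (fun Y W => R X Y X W) (fun _ _ _ => hR.add₂ ..) (fun _ _ _ => hR.smul₂ ..)
    (fun _ _ _ => hR.add₄ ..) (fun _ _ _ => hR.smul₄ ..)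

/-- The bilinear form `(Y, W) ↦ R(X, JX, Y, JW)`. -/
def bisect (hR : IsAlgCurvTensor R) (J : V →ₗ[ℝ] V) (X : V) : V →ₗ[ℝ] V →ₗ[ℝ] ℝ :=
  LinearMap.mk₂ ℝ (fun Y W => R X (J X) Y (J W)) (fun _ _ _ => hR.add₃ ..)
    (fun _ _ _ => hR.smul₃ ..) (fun _ _ _ => by rw [map_add, hR.add₄])
    (fun _ _ _ => by rw [map_smul, hR.smul₄, smul_eq_mul])

lemma jacobi_apply (hR : IsAlgCurvTensor R) (X Y W : V) : hR.jacobi X Y W = R X Y X W := rfl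

lemma bisect_apply (hR : IsAlgCurvTensor R) (J : V →ₗ[ℝ] V) (X Y W : V) :
    hR.bisect J X Y W = R X (J X) Y (J W) := rfl

lemma jacobi_symm (hR : IsAlgCurvTensor R) (X Y W : V) :
    hR.jacobi X Y W = hR.jacobi X W Y := hR.pairSymm ..

variable {J : V →ₗ[ℝ] V}

lemma bisect_symm (hR : IsAlgCurvTensor R) (hJ : IsOrthCplx J) (hK : IsKaehlerTensor J R)
    (X Y W : V) : hR.bisect J X Y W = hR.bisect J X W Y := by
  rw [bisect_apply, bisect_apply, hR.antisymm', hR.kaehler₃ hJ hK, neg_neg]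

lemma bisect_map (hR : IsAlgCurvTensor R) (hK : IsKaehlerTensor J R) (X Y W : V) :
    hR.bisect J X (J Y) (J W) = hR.bisect J X Y W := hK ..

/-- A second complex structure that anticommutes with `J` and under which `R` is also Kähler
reverses the sign of `R(X, JX, Y, JW)`. -/
lemma bisect_map_anti (hR : IsAlgCurvTensor R) {A : V →ₗ[ℝ] V} (hA : IsKaehlerTensor A R)
    (hanti : ∀ Z, J (A Z) = -A (J Z)) (X Y W : V) :
    hR.bisect J X (A Y) (A W) = -hR.bisect J X Y W := by
  rw [bisect_apply, bisect_apply, hanti, hR.neg₄, hA]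

/-- The first Bianchi identity for a Kähler tensor. -/
lemma bisect_eq (hR : IsAlgCurvTensor R) (hJ : IsOrthCplx J) (hK : IsKaehlerTensor J R)
    (X Y W : V) :
    hR.bisect J X Y W = hR.jacobi X Y W + hR.jacobi X (J Y) (J W) := by
  rw [bisect_apply, jacobi_apply, jacobi_apply]
  have h1 := hR.bianchi X (J X) Y (J W)
  have h2 : R (J X) Y X (J W) = -R X (J Y) X (J W) := hR.kaehler₁ hJ hK ..
  have h3 : R Y X (J X) (J W) = -R X Y X W := by rw [hK, hR.antisymm]
  linarith

/-- `Q(R)(X,JX,X,JX) = 2|t|² - |d|²`, where `t(Y,W) = R(X,JX,Y,JW)`, and `d` is twice the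
`J`-anti-invariant part of the Jacobi form of `X`. -/
lemma Qop_eq [FiniteDimensional ℝ V] (hR : IsAlgCurvTensor R) (hJ : IsOrthCplx J)
    (hK : IsKaehlerTensor J R) (X : V) :
    Qop R X (J X) X (J X) =
      2 * ∑ p, ∑ q, hR.bisect J X (stdOrthonormalBasis ℝ V p) (stdOrthonormalBasis ℝ V q) ^ 2
      - ∑ p, ∑ q, (hR.jacobi X - (hR.jacobi X).compl₁₂ J J)
          (stdOrthonormalBasis ℝ V p) (stdOrthonormalBasis ℝ V q) ^ 2 := by
  simp only [Qop, Bop]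
  set b := stdOrthonormalBasis ℝ V
  set s := hR.jacobi X
  set t := hR.bisect J X with ht
  -- the term coming from the curvature operator
  have h1 : ∑ p, ∑ q, R X (J X) (b p) (b q) ^ 2 = ∑ p, ∑ q, t (b p) (b q) ^ 2 := by
    refine Finset.sum_congr rfl fun p _ => ?_
    have h := sum_move b hJ (t (b p)) (t (b p) ∘ₗ J)
    simp only [LinearMap.comp_apply, hJ.1, map_neg, mul_neg, Finset.sum_neg_distrib, neg_neg] at h
    simp only [sq, ← h]
    refine Finset.sum_congr rfl fun q _ => ?_
    have : t (b p) (J (b q)) = -R X (J X) (b p) (b q) := by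
      rw [ht, bisect_apply, hJ.1, hR.neg₄]
    rw [this]
    ring
  have h2 : ∀ Y W, R X Y X W = s Y W := fun _ _ => rfl
  have h3 : ∀ Y W, R (J X) Y (J X) W = s (J Y) (J W) := fun Y W => by
    rw [hR.kaehler₁ hJ hK, hR.kaehler₃ hJ hK, neg_neg, h2]
  have h4 : ∀ Y W, R X Y (J X) W = -s Y (J W) := fun Y W => hR.kaehler₃ hJ hK ..
  have h5 : ∀ Y W, R (J X) Y X W = -s (J Y) W := fun Y W => hR.kaehler₁ hJ hK ..
  have h6 : ∑ p, ∑ q, s (b p) (J (b q)) * s (J (b p)) (b q)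
      = -∑ p, ∑ q, s (b p) (b q) * s (J (b p)) (J (b q)) := by
    rw [← Finset.sum_neg_distrib]
    exact Finset.sum_congr rfl fun p _ => sum_move b hJ (s (b p)) (s (J (b p)))
  have h7 : ∑ p, ∑ q, t (b p) (b q) ^ 2
      - ∑ p, ∑ q, (s - s.compl₁₂ J J) (b p) (b q) ^ 2
      = 4 * ∑ p, ∑ q, s (b p) (b q) * s (J (b p)) (J (b q)) := by
    rw [Finset.mul_sum, ← Finset.sum_sub_distrib]
    refine Finset.sum_congr rfl fun p _ => ?_
    rw [Finset.mul_sum, ← Finset.sum_sub_distrib]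
    refine Finset.sum_congr rfl fun q _ => ?_
    rw [ht, hR.bisect_eq hJ hK, LinearMap.sub_apply, LinearMap.sub_apply,
      LinearMap.compl₁₂_apply]
    ring
  have e1 : ∑ p, ∑ q, (R X (J X) (b p) (b q) * R X (J X) (b p) (b q)
      + R X (J X) (b p) (b q) * R X (J X) (b p) (b q))
      = 2 * ∑ p, ∑ q, t (b p) (b q) ^ 2 := by
    rw [← h1]
    simp only [Finset.mul_sum]
    exact Finset.sum_congr rfl fun p _ => Finset.sum_congr rfl fun q _ => by ring
  have e2 : ∑ p, ∑ q, (R X (b p) X (b q) * R (J X) (b p) (J X) (b q)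
      + R (J X) (b p) (J X) (b q) * R X (b p) X (b q))
      = 2 * ∑ p, ∑ q, s (b p) (b q) * s (J (b p)) (J (b q)) := by
    simp only [Finset.mul_sum, h2, h3]
    exact Finset.sum_congr rfl fun p _ => Finset.sum_congr rfl fun q _ => by ring
  have e3 : ∑ p, ∑ q, (R X (b p) (J X) (b q) * R (J X) (b p) X (b q)
      + R (J X) (b p) X (b q) * R X (b p) (J X) (b q))
      = 2 * ∑ p, ∑ q, s (b p) (J (b q)) * s (J (b p)) (b q) := by
    simp only [Finset.mul_sum, h4, h5]
    exact Finset.sum_congr rfl fun p _ => Finset.sum_congr rfl fun q _ => by ring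
  rw [e1, e2, e3, h6]
  linarith

/-- Expansion of the holomorphic sectional curvature along a line. -/
lemma expand (hR : IsAlgCurvTensor R) (hJ : IsOrthCplx J) (hK : IsKaehlerTensor J R)
    (X Y : V) (u : ℝ) :
    R (X + u • Y) (J (X + u • Y)) (X + u • Y) (J (X + u • Y))
      = R X (J X) X (J X) + 4 * hR.bisect J X X Y * u
        + (4 * hR.jacobi X (J Y) (J Y) + 2 * hR.bisect J X Y Y) * u ^ 2
        + 4 * R X (J Y) Y (J Y) * u ^ 3 + R Y (J Y) Y (J Y) * u ^ 4 := by
  have h : ∀ Z W, R (X + u • Y) (J (X + u • Y)) Z W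
      = R X (J X) Z W + 2 * u * R X (J Y) Z W + u ^ 2 * R Y (J Y) Z W := by
    intro Z W
    have h1 : R Y (J X) Z W = R X (J Y) Z W := by
      rw [hR.antisymm, hR.kaehler₁ hJ hK, neg_neg]
    rw [map_add, map_smul, hR.addLeft, hR.add₂, hR.add₂, hR.smulLeft, hR.smulLeft, hR.smul₂,
      hR.smul₂, h1]
    ring
  rw [h, hR.pairSymm X (J X), hR.pairSymm X (J Y), hR.pairSymm Y (J Y), h, h, h,
    bisect_apply, bisect_apply, jacobi_apply, hR.pairSymm X (J Y) X (J X),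
    hR.pairSymm Y (J Y) X (J X), hR.pairSymm Y (J Y) X (J Y)]
  ring

end IsAlgCurvTensor

/-! ### First- and second-order conditions at the maximum -/

/-- A quartic polynomial that vanishes at `0` and is nonnegative has vanishing linear and
nonnegative quadratic coefficient. -/
lemma coeff_of_quartic_nonneg {a₁ a₂ a₃ a₄ : ℝ}
    (h : ∀ u : ℝ, 0 ≤ a₁ * u + a₂ * u ^ 2 + a₃ * u ^ 3 + a₄ * u ^ 4) : a₁ = 0 ∧ 0 ≤ a₂ := by
  -- divide by `u` or `u ^ 2` and let `u` tend to `0` from the right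
  have lim : ∀ c₀ c₁ c₂ c₃ : ℝ, (∀ u : ℝ, 0 < u → 0 ≤ c₀ + c₁ * u + c₂ * u ^ 2 + c₃ * u ^ 3) →
      0 ≤ c₀ := by
    intro c₀ c₁ c₂ c₃ hc
    have hcont : Continuous fun u : ℝ => c₀ + c₁ * u + c₂ * u ^ 2 + c₃ * u ^ 3 := by fun_prop
    have ht := (hcont.tendsto 0).mono_left (nhdsWithin_le_nhds (s := Set.Ioi 0))
    have := ge_of_tendsto ht (Filter.eventually_of_mem self_mem_nhdsWithin fun u hu => hc u hu)
    simpa using this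
  have h1 : 0 ≤ a₁ := lim a₁ a₂ a₃ a₄ fun u hu => by
    have := h u
    exact nonneg_of_mul_nonneg_right (by linarith) hu
  have h2 : 0 ≤ -a₁ := lim (-a₁) a₂ (-a₃) a₄ fun u hu => by
    have := h (-u)
    exact nonneg_of_mul_nonneg_right (by linarith) hu
  have h3 : a₁ = 0 := by linarith
  refine ⟨h3, lim a₂ a₃ a₄ 0 fun u hu => ?_⟩
  have := h u
  rw [h3] at this
  exact nonneg_of_mul_nonneg_right (by linarith) (pow_pos hu 2)

section Maximum

variable {R : V → V → V → V → ℝ} {J : V →ₗ[ℝ] V} {X : V}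

/-- The optimality conditions at a unit vector `X` maximizing the holomorphic sectional
curvature: the gradient of the curvature is radial, and the Hessian is bounded. -/
lemma IsAlgCurvTensor.optimality (hR : IsAlgCurvTensor R) (hJ : IsOrthCplx J)
    (hK : IsKaehlerTensor J R) (hX : ‖X‖ = 1)
    (hmax : ∀ Z, ‖Z‖ = 1 → R Z (J Z) Z (J Z) ≤ R X (J X) X (J X)) (Y : V) :
    hR.bisect J X X Y = R X (J X) X (J X) * ⟪X, Y⟫ ∧
    2 * hR.jacobi X (J Y) (J Y) + hR.bisect J X Y Y
      ≤ R X (J X) X (J X) * (⟪Y, Y⟫ + 2 * ⟪X, Y⟫ ^ 2) := by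
  set σ := R X (J X) X (J X) with hσ
  have hhom : ∀ Z, R Z (J Z) Z (J Z) ≤ σ * ⟪Z, Z⟫ ^ 2 := by
    intro Z
    by_cases hZ : Z = 0
    · have h0 : R 0 (J 0) 0 (J 0) = 0 := by
        have := hR.smulLeft 0 0 (J 0) 0 (J 0)
        rwa [zero_smul, zero_mul] at this
      rw [map_zero] at h0
      simp [hZ, h0]
    · have hn : 0 < ‖Z‖ := norm_pos_iff.2 hZ
      have h := hmax (‖Z‖⁻¹ • Z) (by rw [norm_smul, norm_inv, norm_norm, inv_mul_cancel₀ hn.ne'])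
      rw [map_smul, hR.smulLeft, hR.smul₂, hR.smul₃, hR.smul₄] at h
      rw [real_inner_self_eq_norm_sq]
      field_simp at h
      linarith
  have hXX : ⟪X, X⟫ = (1 : ℝ) := by rw [real_inner_self_eq_norm_sq, hX, one_pow]
  have hpoly := coeff_of_quartic_nonneg
    (a₁ := 4 * σ * ⟪X, Y⟫ - 4 * hR.bisect J X X Y)
    (a₂ := σ * (2 * ⟪Y, Y⟫ + 4 * ⟪X, Y⟫ ^ 2)
      - (4 * hR.jacobi X (J Y) (J Y) + 2 * hR.bisect J X Y Y))
    (a₃ := 4 * σ * ⟪X, Y⟫ * ⟪Y, Y⟫ - 4 * R X (J Y) Y (J Y))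
    (a₄ := σ * ⟪Y, Y⟫ ^ 2 - R Y (J Y) Y (J Y)) fun u => by
      have h := hhom (X + u • Y)
      rw [hR.expand hJ hK, ← hσ, inner_add_left, inner_add_right, inner_add_right,
        real_inner_smul_left, real_inner_smul_left, real_inner_smul_right, real_inner_smul_right,
        real_inner_comm X Y, hXX] at h
      linarith
  constructor <;> linarith [hpoly.1, hpoly.2]

/-- Averaging the second-order conditions in the directions `Y` and `JY` eliminates the Jacobi
form. -/
lemma IsAlgCurvTensor.bisect_self_le (hR : IsAlgCurvTensor R) (hJ : IsOrthCplx J)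
    (hK : IsKaehlerTensor J R) (hX : ‖X‖ = 1)
    (hmax : ∀ Z, ‖Z‖ = 1 → R Z (J Z) Z (J Z) ≤ R X (J X) X (J X)) {Y : V}
    (hY : ⟪X, Y⟫ = 0) (hJY : ⟪X, J Y⟫ = 0) :
    hR.bisect J X Y Y ≤ R X (J X) X (J X) / 2 * ⟪Y, Y⟫ := by
  have h1 := (hR.optimality hJ hK hX hmax Y).2
  have h2 := (hR.optimality hJ hK hX hmax (J Y)).2
  have h3 := hR.bisect_eq hJ hK X Y Y
  rw [hR.bisect_map hK, hJ.1, hJ.2, map_neg, map_neg, LinearMap.neg_apply, neg_neg, hJY] at h2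
  rw [hY] at h1
  linarith

end Maximum

theorem Q_hyperKaehler_max_bound [FiniteDimensional ℝ V]
    (m : ℕ) (hm : 2 ≤ m) (hdim : Module.finrank ℝ V = 4 * m)
    (I J K : V →ₗ[ℝ] V) (hquat : IsQuatStruct I J K)
    (R₁ : V → V → V → V → ℝ) (hR₁ : IsAlgCurvTensor R₁)
    (hHK : IsHyperKaehler I J K R₁)
    (X : V) (hX : ‖X‖ = 1)
    (hmax : ∀ Z : V, ‖Z‖ = 1 → ∀ a b c : ℝ, a ^ 2 + b ^ 2 + c ^ 2 = 1 →
      R₁ Z (a • I Z + b • J Z + c • K Z) Z (a • I Z + b • J Z + c • K Z)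
        ≤ R₁ X (J X) X (J X)) :
    Qop R₁ X (J X) X (J X) ≤ (2 * (m : ℝ) + 4) * (R₁ X (J X) X (J X)) ^ 2 := by
  obtain ⟨hI, hJ, hK, hIJK⟩ := hquat
  obtain ⟨hKI, hKJ, -⟩ := hHK
  have hmaxJ : ∀ Z, ‖Z‖ = 1 → R₁ Z (J Z) Z (J Z) ≤ R₁ X (J X) X (J X) := fun Z hZ => by
    simpa using hmax Z hZ 0 1 0 (by norm_num)
  have hfirst := fun Y => (hR₁.optimality hJ hKJ hX hmaxJ Y).1
  have hsecond := fun (Y : V) => hR₁.bisect_self_le (Y := Y) hJ hKJ hX hmaxJ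
  set σ := R₁ X (J X) X (J X) with hσ
  set t := hR₁.bisect J X with ht
  have hXX : ⟪X, X⟫ = (1 : ℝ) := by rw [real_inner_self_eq_norm_sq, hX, one_pow]
  have hJK : ∀ Z, J (K Z) = I Z := fun Z => by
    have h := congrArg I (hIJK Z)
    rw [hI.1, map_neg] at h
    exact neg_injective h
  have hIJ : ∀ Z, I (J Z) = K Z := fun Z => by
    have h := hIJK (K Z)
    rw [hK.1, map_neg, map_neg] at h
    exact neg_injective h
  have hanti : ∀ Z, J (I Z) = -I (J Z) := fun Z => by
    rw [← hJK Z, hJ.1, hIJ]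
  have htJ : ∀ Y W, t (J Y) (J W) = t Y W := hR₁.bisect_map hKJ X
  have htI : ∀ Y W, t (I Y) (I W) = -t Y W := hR₁.bisect_map_anti hKI hanti X
  have htsymm : ∀ Y W, t Y W = t W Y := hR₁.bisect_symm hJ hKJ X
  -- the four eigenvectors of `t`
  have hE0 : ∀ Y, t X Y = σ * ⟪X, Y⟫ := hfirst
  have hE1 : ∀ Y, t (J X) Y = σ * ⟪J X, Y⟫ := fun Y => by
    rw [← htJ, hJ.1, map_neg, LinearMap.neg_apply, hE0, hJ.inner_left]
    ring
  have hE2 : ∀ Y, t (I X) Y = -σ * ⟪I X, Y⟫ := fun Y => by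
    rw [← neg_neg (t (I X) Y), ← htI, hI.1, map_neg, LinearMap.neg_apply, hE0, hI.inner_left]
    ring
  have hE3 : ∀ Y, t (I (J X)) Y = -σ * ⟪I (J X), Y⟫ := fun Y => by
    rw [← neg_neg (t (I (J X)) Y), ← htI, hI.1, map_neg, LinearMap.neg_apply, hE1,
      hI.inner_left]
    ring
  have o01 : ⟪X, J X⟫ = 0 := hJ.inner_self X
  have o02 : ⟪X, I X⟫ = 0 := hI.inner_self X
  have o03 : ⟪X, I (J X)⟫ = 0 := by
    have h1 : ⟪I X, J X⟫ = -⟪X, I (J X)⟫ := hI.inner_left X (J X)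
    have h2 : ⟪J X, I X⟫ = ⟪X, I (J X)⟫ := by
      rw [hJ.inner_left, hanti, inner_neg_right, neg_neg]
    rw [real_inner_comm] at h1
    linarith
  have o12 : ⟪J X, I X⟫ = 0 := by rw [hJ.inner_left, hanti, inner_neg_right, o03]; simp
  have o13 : ⟪J X, I (J X)⟫ = 0 := hI.inner_self (J X)
  have o23 : ⟪I X, I (J X)⟫ = 0 := by rw [hI.2, o01]
  -- the second-order condition in the direction `IX` gives the sign of `σ`
  have hσ0 : 0 ≤ σ := by
    have h := hsecond (I X) o02 (by rw [hanti, inner_neg_right, o03, neg_zero])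
    rw [hE2, hI.2, hXX] at h
    linarith
  have hE : Orthonormal ℝ ![X, J X, I X, I (J X)] := by
    have nJ : ∀ Z, ‖J Z‖ = ‖Z‖ := (LinearMap.isometryOfInner J hJ.2).norm_map
    have nI : ∀ Z, ‖I Z‖ = ‖Z‖ := (LinearMap.isometryOfInner I hI.2).norm_map
    rw [orthonormal_iff_ite]
    intro i j
    fin_cases i <;> fin_cases j <;>
      simp [hI.2, nI, nJ, hX, o01, o02, o03, o12, o13, real_inner_comm X (J X),
        real_inner_comm X (I X), real_inner_comm X (I (J X)), real_inner_comm (J X) (I X),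
        real_inner_comm (J X) (I (J X))]
  have hT := hilbertSchmidt_le (stdOrthonormalBasis ℝ V) t htsymm hσ0 _ hE ![1, 1, -1, -1]
    (fun i => by fin_cases i <;> simp)
    (fun i Y => by
      fin_cases i
      · simpa using hE0 Y
      · simpa using hE1 Y
      · simpa using hE2 Y
      · simpa using hE3 Y)
    (fun Y hY => by
      have y0 : ⟪X, Y⟫ = 0 := hY 0
      have y1 : ⟪J X, Y⟫ = 0 := hY 1
      have y2 : ⟪I X, Y⟫ = 0 := hY 2
      have y3 : ⟪I (J X), Y⟫ = 0 := hY 3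
      have z1 : ⟪X, J Y⟫ = 0 := by linarith [hJ.inner_left X Y]
      have z2 : ⟪X, I Y⟫ = 0 := by linarith [hI.inner_left X Y]
      have z3 : ⟪X, J (I Y)⟫ = 0 := by
        linarith [hJ.inner_left X (I Y), hI.inner_left (J X) Y]
      have h1 := hsecond Y y0 z1
      have h2 := hsecond (I Y) z2 z3
      rw [htI, hI.2] at h2
      exact abs_le.2 ⟨by linarith, h1⟩)
  have hcard : (Fintype.card (Fin (Module.finrank ℝ V)) : ℝ) = 4 * m := by
    rw [Fintype.card_fin, hdim]
    push_cast
    ring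
  have hs0 : hR₁.jacobi X X X = 0 := by
    have h := hR₁.antisymm X X X X
    rw [IsAlgCurvTensor.jacobi_apply]
    linarith
  have hs1 : hR₁.jacobi X (J X) (J X) = σ := rfl
  have hD := two_mul_sq_le_hilbertSchmidt (stdOrthonormalBasis ℝ V)
    (hR₁.jacobi X - (hR₁.jacobi X).compl₁₂ J J) (σ := σ) hXX ((hJ.2 X X).trans hXX) o01
    (by simp [hs0, hs1]) (by simp [hs0, hs1, hJ.1])
  rw [hR₁.Qop_eq hJ hKJ X]
  rw [hcard] at hT
  linarith
end
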